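/- Consider the inverted pendulum mass matrix on ℝ³: g₁₁ = 1, g₁₂ = −a cos(x¹), g₁₃ = −a sin(x¹), g₂₂ = g₃₃ = 1, g₂₃ = 0, with 0 < a < 1, and let λ¹ = σ₀, λ² = μ₀ cos(x¹), λ³ = 0 with σ₀ ≠ 0. Let G₂₂, G₂₃, G₃₃ : ℝ² → ℝ be arbitrary smooth functions, and define the symmetric matrix-valued map ĝ on ℝ³ by: ĝ₂₂(x) = G₂₂(x² − (μ₀/σ₀) sin(x¹), x³), ĝ₂₃(x) = G₂₃(x² − (μ₀/σ₀) sin(x¹), x³), ĝ₃₃(x) = G₃₃(x² − (μ₀/σ₀) sin(x¹), x³), ĝ₁₂(x) = (−a cos(x¹) − μ₀ cos(x¹) ĝ₂₂(x))/σ₀, ĝ₁₃(x) = (−a sin(x¹) − μ₀ cos(x¹) ĝ₂₃(x))/σ₀, ĝ₁₁(x) = (1 − μ₀ cos(x¹) ĝ₁₂(x))/σ₀. Then ĝ satisfies the ĝ-equations λ^ℓ ∂ĝ_{ij}/∂x^ℓ + (∂λ^ℓ/∂x^i)ĝ_{ℓj} + (∂λ^ℓ/∂x^j)ĝ_{ℓi}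 = ∂g_{ij}/∂x¹ for all i,j = 1,2,3, and the compatibility relation g_{1i} = λ^j ĝ_{ji} holds for i = 1,2,3. -/

import Mathlib

/-- Partial derivative in the `k`-th coordinate direction. -/
noncomputable def pd {n : ℕ} (k : Fin n) (f : (Fin n → ℝ) → ℝ) (x : Fin n → ℝ) : ℝ :=
  fderiv ℝ f x (Pi.single k 1)

/-- Mass matrix of the inverted pendulum in a vertical plane. -/
noncomputable def gPend (a : ℝ) (x : Fin 3 → ℝ) : Matrix (Fin 3) (Fin 3) ℝ :=
  !![1, -a * Real.cos (x 0), -a * Real.sin (x 0);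
     -a * Real.cos (x 0), 1, 0;
     -a * Real.sin (x 0), 0, 1]

/-- The matrix `ĝ` for the inverted pendulum, built from arbitrary smooth
functions `G22, G23, G33` of `(x² − (μ₀/σ₀) sin x¹, x³)`. -/
noncomputable def ghatPend (a σ₀ μ₀ : ℝ) (G22 G23 G33 : (Fin 2 → ℝ) → ℝ)
    (x : Fin 3 → ℝ) : Matrix (Fin 3) (Fin 3) ℝ :=
  let y := ![x 1 - (μ₀ / σ₀) * Real.sin (x 0), x 2]
  let g22 := G22 y
  let g23 := G23 y
  let g33 := G33 y
  let g12 := (-a * Real.cos (x 0) - μ₀ * Real.cos (x 0) * g22) / σ₀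
  let g13 := (-a * Real.sin (x 0) - μ₀ * Real.cos (x 0) * g23) / σ₀
  let g11 := (1 - μ₀ * Real.cos (x 0) * g12) / σ₀
  !![g11, g12, g13; g12, g22, g23; g13, g23, g33]

/-!
The left-hand side of the ĝ-equations is the Lie derivative `L_λ ĝ`, and by the Leibniz rule
`ι_λ (L_λ ĝ) = L_λ (ι_λ ĝ)`. The compatibility relation says `ι_λ ĝ = g_{1·}`, and for the pendulum
`L_λ g_{1·} = ι_λ ∂₁g` does not involve the unknown `ĝ` any more. Hence the symmetric matrix
`L_λ ĝ - ∂₁g` is annihilated by `λ`, and since `λ¹ = σ₀ ≠ 0` it vanishes as soon as its entries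
with `i, j ∈ {2, 3}` do. There `∂λ/∂xⁱ = 0` and `∂₁g = 0`, so what remains is that `ĝ_{ij}` is
constant along `λ`: it is a function of the first integrals `x² - (μ₀/σ₀) sin x¹` and `x³`.
-/

open Matrix

section PartialDerivatives

variable {n : ℕ} {f g : (Fin n → ℝ) → ℝ} {x : Fin n → ℝ}

lemma pd_sub (k : Fin n) (hf : DifferentiableAt ℝ f x) (hg : DifferentiableAt ℝ g x) :
    pd k (fun y ↦ f y - g y) x = pd k f x - pd k g x := by
  simp [pd, fderiv_fun_sub hf hg]

lemma pd_mul (k : Fin n) (hf : DifferentiableAt ℝ f x) (hg : DifferentiableAt ℝ g x) :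
    pd k (fun y ↦ f y * g y) x = f x * pd k g x + pd k f x * g x := by
  simp [pd, fderiv_fun_mul hf hg, mul_comm]

lemma pd_sum {ι : Type*} {s : Finset ι} {F : ι → (Fin n → ℝ) → ℝ} (k : Fin n)
    (hF : ∀ i ∈ s, DifferentiableAt ℝ (F i) x) :
    pd k (fun y ↦ ∑ i ∈ s, F i y) x = ∑ i ∈ s, pd k (F i) x := by
  simp [pd, fderiv_fun_sum hF]

lemma pd_comp_apply {h : ℝ → ℝ} {h' : ℝ} {i : Fin n} (hh : HasDerivAt h h' (x i)) (k : Fin n) :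
    pd k (fun y ↦ h (y i)) x = h' * (Pi.single k 1 : Fin n → ℝ) i := by
  have hproj : HasFDerivAt (fun y : Fin n → ℝ ↦ y i) _ x := hasFDerivAt_apply (𝕜 := ℝ) i x
  have hcomp : HasFDerivAt (fun y : Fin n → ℝ ↦ h (y i)) _ x := hh.comp_hasFDerivAt x hproj
  simp [pd, hcomp.fderiv]

lemma pd_apply (k i : Fin n) : pd k (fun y ↦ y i) x = (Pi.single k 1 : Fin n → ℝ) i :=
  (pd_comp_apply (hasDerivAt_id' (x i)) k).trans (one_mul _)

lemma sum_mul_pd (f : (Fin n → ℝ) → ℝ) (x v : Fin n → ℝ) :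
    ∑ l, v l * pd l f x = fderiv ℝ f x v := by
  conv_rhs => rw [pi_eq_sum_univ' v]
  simp [pd]

lemma sum_mul_pd_comp_eq_zero {m : ℕ} {φ : (Fin n → ℝ) → Fin m → ℝ} {G : (Fin m → ℝ) → ℝ}
    (hG : DifferentiableAt ℝ G (φ x)) (hφ : ∀ i, DifferentiableAt ℝ (fun y ↦ φ y i) x)
    {v : Fin n → ℝ} (hv : ∀ i, ∑ l, v l * pd l (fun y ↦ φ y i) x = 0) :
    ∑ l, v l * pd l (fun y ↦ G (φ y)) x = 0 := by
  have hφv : fderiv ℝ φ x v = 0 := by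
    ext i
    change fderiv ℝ (fun y i ↦ φ y i) x v i = 0
    rw [fderiv_pi hφ, ContinuousLinearMap.pi_apply, ← sum_mul_pd, hv]
  rw [sum_mul_pd, fderiv_fun_comp x hG (differentiableAt_pi.2 hφ), ContinuousLinearMap.comp_apply,
    hφv, map_zero]

end PartialDerivatives

section LieDerivative

variable {n : ℕ}

/-- The Lie derivative `(L_v ω)_j` of a covector field `ω` along the vector field `v`. -/
noncomputable def lieDerivCovector (v ω : (Fin n → ℝ) → Fin n → ℝ) (x : Fin n → ℝ) : Fin n → ℝ :=
  fun j ↦ ∑ l, v x l * pd l (fun y ↦ ω y j) x + ∑ l, pd j (fun y ↦ v y l) x * ω x l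

/-- The Lie derivative `(L_v T)_{ij}` of a field `T` of bilinear forms along the vector field `v`.
`T` need not be symmetric, so the last factor is `T_{il}` rather than the `T_{li}` of the
ĝ-equations. -/
noncomputable def lieDerivBilin (v : (Fin n → ℝ) → Fin n → ℝ)
    (T : (Fin n → ℝ) → Matrix (Fin n) (Fin n) ℝ) (x : Fin n → ℝ) : Matrix (Fin n) (Fin n) ℝ :=
  of fun i j ↦ ∑ l, v x l * pd l (fun y ↦ T y i j) x
    + ∑ l, pd i (fun y ↦ v y l) x * T x l j + ∑ l, pd j (fun y ↦ v y l) x * T x i l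

variable {v : (Fin n → ℝ) → Fin n → ℝ} {T : (Fin n → ℝ) → Matrix (Fin n) (Fin n) ℝ}
  {x : Fin n → ℝ}

lemma lieDerivBilin_apply_of_isSymm (hT : (T x).IsSymm) (i j : Fin n) :
    lieDerivBilin v T x i j = ∑ l, v x l * pd l (fun y ↦ T y i j) x
      + ∑ l, pd i (fun y ↦ v y l) x * T x l j + ∑ l, pd j (fun y ↦ v y l) x * T x l i := by
  simp only [lieDerivBilin, of_apply, hT.apply i]

lemma isSymm_lieDerivBilin (hT : ∀ y, (T y).IsSymm) : (lieDerivBilin v T x).IsSymm := by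
  refine IsSymm.ext fun i j ↦ ?_
  rw [lieDerivBilin_apply_of_isSymm (hT x), lieDerivBilin_apply_of_isSymm (hT x), add_right_comm]
  simp only [fun y ↦ (hT y).apply i j]

lemma vecMul_lieDerivBilin (hv : ∀ i, DifferentiableAt ℝ (fun y ↦ v y i) x)
    (hT : ∀ i j, DifferentiableAt ℝ (fun y ↦ T y i j) x) :
    v x ᵥ* lieDerivBilin v T x = lieDerivCovector v (fun y ↦ v y ᵥ* T y) x := by
  ext j
  have leibniz (l : Fin n) : pd l (fun y ↦ ∑ i, v y i * T y i j) x =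
      ∑ i, (v x i * pd l (fun y ↦ T y i j) x + pd l (fun y ↦ v y i) x * T x i j) := by
    rw [pd_sum (F := fun i y ↦ v y i * T y i j) l fun i _ ↦ (hv i).fun_mul (hT i j)]
    exact Finset.sum_congr rfl fun i _ ↦ pd_mul l (hv i) (hT i j)
  simp only [lieDerivCovector, lieDerivBilin, vecMul, dotProduct, of_apply, leibniz, mul_add,
    Finset.mul_sum, Finset.sum_add_distrib]
  refine congrArg₂ _ (congrArg₂ _ ?_ rfl) ?_
  all_goals
    rw [Finset.sum_comm]
    simp only [mul_left_comm]

end LieDerivative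

lemma isSymm_eq_of_vecMul_eq {R : Type*} [NonUnitalNonAssocSemiring R] [IsRightCancelAdd R]
    [IsLeftCancelMulZero R] {n : ℕ} {A B : Matrix (Fin (n + 1)) (Fin (n + 1)) R}
    (hA : A.IsSymm) (hB : B.IsSymm) {v : Fin (n + 1) → R} (hv : v 0 ≠ 0)
    (hAB : v ᵥ* A = v ᵥ* B) (hsucc : ∀ i j : Fin n, A i.succ j.succ = B i.succ j.succ) :
    A = B := by
  have row_zero {j : Fin (n + 1)} (hj : ∀ i : Fin n, A i.succ j = B i.succ j) : A 0 j = B 0 j := by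
    have h := congrFun hAB j
    simp only [vecMul, dotProduct, Fin.sum_univ_succ, hj] at h
    exact mul_left_cancel₀ hv (add_right_cancel h)
  have row_zero_succ (j : Fin n) : A 0 j.succ = B 0 j.succ := row_zero fun i ↦ hsucc i j
  have col_zero_succ (i : Fin n) : A i.succ 0 = B i.succ 0 := by
    rw [← hA.apply, ← hB.apply, row_zero_succ]
  ext i j
  cases i using Fin.cases with
  | zero => cases j using Fin.cases with
    | zero => exact row_zero col_zero_succ
    | succ j => exact row_zero_succ j
  | succ i => cases j using Fin.cases with
    | zero => exact col_zero_succ i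
    | succ j => exact hsucc i j

section Pendulum

variable (a σ₀ μ₀ : ℝ) (G22 G23 G33 : (Fin 2 → ℝ) → ℝ) (x : Fin 3 → ℝ)

/-- The vector field `λ = (σ₀, μ₀ cos x¹, 0)` along which the ĝ-equations of the pendulum
transport `ĝ`. -/
noncomputable def lamPend : Fin 3 → ℝ :=
  ![σ₀, μ₀ * Real.cos (x 0), 0]

/-- The two independent first integrals `x² - (μ₀/σ₀) sin x¹` and `x³` of `lamPend` (for `σ₀ ≠ 0`),
on which the free entries of `ghatPend` depend. -/
noncomputable def firstIntegralsPend : Fin 2 → ℝ :=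
  ![x 1 - (μ₀ / σ₀) * Real.sin (x 0), x 2]

/-- The matrix `∂g/∂x¹` on the right-hand side of the ĝ-equations of the pendulum. -/
noncomputable def pdGPend : Matrix (Fin 3) (Fin 3) ℝ :=
  of fun i j ↦ pd 0 (fun y ↦ gPend a y i j) x

lemma isSymm_gPend : (gPend a x).IsSymm := by
  refine IsSymm.ext fun i j ↦ ?_
  fin_cases i <;> fin_cases j <;> rfl

lemma isSymm_pdGPend : (pdGPend a x).IsSymm :=
  IsSymm.ext fun i j ↦ by simp only [pdGPend, of_apply, fun y ↦ (isSymm_gPend a y).apply i j]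

lemma isSymm_ghatPend : (ghatPend a σ₀ μ₀ G22 G23 G33 x).IsSymm := by
  refine IsSymm.ext fun i j ↦ ?_
  fin_cases i <;> fin_cases j <;> rfl

lemma pd_lamPend (k l : Fin 3) :
    pd k (fun y ↦ lamPend σ₀ μ₀ y l) x =
      ![0, μ₀ * -Real.sin (x 0), 0] l * (Pi.single k 1 : Fin 3 → ℝ) 0 := by
  fin_cases l
  · exact pd_comp_apply (hasDerivAt_const (x 0) σ₀) k
  · exact pd_comp_apply ((Real.hasDerivAt_cos (x 0)).const_mul μ₀) k
  · exact pd_comp_apply (hasDerivAt_const (x 0) 0) k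

lemma pd_gPend (k i j : Fin 3) :
    pd k (fun y ↦ gPend a y i j) x =
      !![0, -a * -Real.sin (x 0), -a * Real.cos (x 0);
         -a * -Real.sin (x 0), 0, 0;
         -a * Real.cos (x 0), 0, 0] i j * (Pi.single k 1 : Fin 3 → ℝ) 0 := by
  have hcos := pd_comp_apply ((Real.hasDerivAt_cos (x 0)).const_mul (-a)) k
  have hsin := pd_comp_apply ((Real.hasDerivAt_sin (x 0)).const_mul (-a)) k
  have hconst (c : ℝ) := pd_comp_apply (hasDerivAt_const (x 0) c) k
  fin_cases i <;> fin_cases j <;> first | exact hcos | exact hsin | exact hconst _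

lemma lieDerivCovector_gPend :
    lieDerivCovector (lamPend σ₀ μ₀) (fun y ↦ gPend a y 0) x =
      lamPend σ₀ μ₀ x ᵥ* pdGPend a x := by
  ext j
  simp only [lieDerivCovector, pdGPend, vecMul, dotProduct, of_apply, pd_gPend, pd_lamPend]
  fin_cases j <;> simp [Fin.sum_univ_three, lamPend, gPend, mul_assoc, mul_comm, mul_left_comm]

variable {σ₀ G22 G23 G33}

lemma lamPend_vecMul_ghatPend (hσ : σ₀ ≠ 0) :
    lamPend σ₀ μ₀ x ᵥ* ghatPend a σ₀ μ₀ G22 G23 G33 x = gPend a x 0 := by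
  ext j
  fin_cases j <;>
    simp [vecMul, dotProduct, Fin.sum_univ_three, lamPend, ghatPend, gPend, mul_div_cancel₀, hσ]

lemma differentiable_lamPend (i : Fin 3) : Differentiable ℝ (fun y ↦ lamPend σ₀ μ₀ y i) := by
  unfold lamPend
  fin_cases i <;> dsimp <;> fun_prop

lemma differentiable_firstIntegralsPend (i : Fin 2) :
    Differentiable ℝ (fun y ↦ firstIntegralsPend σ₀ μ₀ y i) := by
  unfold firstIntegralsPend
  fin_cases i <;> dsimp <;> fun_prop

lemma sum_lamPend_mul_pd_firstIntegralsPend (hσ : σ₀ ≠ 0) (i : Fin 2) :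
    ∑ l, lamPend σ₀ μ₀ x l * pd l (fun y ↦ firstIntegralsPend σ₀ μ₀ y i) x = 0 := by
  have pd_zero (k : Fin 3) : pd k (fun y ↦ firstIntegralsPend σ₀ μ₀ y 0) x =
      (Pi.single k 1 : Fin 3 → ℝ) 1
        - μ₀ / σ₀ * Real.cos (x 0) * (Pi.single k 1 : Fin 3 → ℝ) 0 := by
    refine (pd_sub k (g := fun y ↦ μ₀ / σ₀ * Real.sin (y 0)) (by fun_prop) (by fun_prop)).trans ?_
    rw [pd_apply, pd_comp_apply ((Real.hasDerivAt_sin (x 0)).const_mul (μ₀ / σ₀))]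
  have pd_one (k : Fin 3) : pd k (fun y ↦ firstIntegralsPend σ₀ μ₀ y 1) x =
      (Pi.single k 1 : Fin 3 → ℝ) 2 :=
    pd_apply k 2
  have cancel : σ₀ * (μ₀ / σ₀ * Real.cos (x 0)) = μ₀ * Real.cos (x 0) := by field_simp
  fin_cases i
  · simp [Fin.sum_univ_three, pd_zero, lamPend, cancel]
  · simp [Fin.sum_univ_three, pd_one, lamPend]

lemma sum_lamPend_mul_pd_comp_firstIntegralsPend (hσ : σ₀ ≠ 0) {G : (Fin 2 → ℝ) → ℝ}
    (hG : DifferentiableAt ℝ G (firstIntegralsPend σ₀ μ₀ x)) :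
    ∑ l, lamPend σ₀ μ₀ x l * pd l (fun y ↦ G (firstIntegralsPend σ₀ μ₀ y)) x = 0 :=
  sum_mul_pd_comp_eq_zero hG (fun i ↦ differentiable_firstIntegralsPend μ₀ i x)
    (sum_lamPend_mul_pd_firstIntegralsPend μ₀ x hσ)

variable (hG22 : Differentiable ℝ G22) (hG23 : Differentiable ℝ G23) (hG33 : Differentiable ℝ G33)
include hG22 hG23 hG33

lemma differentiable_ghatPend (i j : Fin 3) :
    Differentiable ℝ (fun y ↦ ghatPend a σ₀ μ₀ G22 G23 G33 y i j) := by
  have comp {G : (Fin 2 → ℝ) → ℝ} (hG : Differentiable ℝ G) :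
      Differentiable ℝ fun y : Fin 3 → ℝ ↦ G ![y 1 - (μ₀ / σ₀) * Real.sin (y 0), y 2] :=
    hG.comp (differentiable_pi.2 (differentiable_firstIntegralsPend μ₀))
  have contracted {g : (Fin 3 → ℝ) → ℝ} (hg : Differentiable ℝ g)
      {c : ℝ → ℝ} (hc : Differentiable ℝ c) :
      Differentiable ℝ fun y ↦ (c (y 0) - μ₀ * Real.cos (y 0) * g y) / σ₀ := by
    fun_prop
  have h12 := contracted (comp hG22) (Real.differentiable_cos.const_mul (-a))
  have h13 := contracted (comp hG23) (Real.differentiable_sin.const_mul (-a))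
  have h11 := contracted h12 (differentiable_const 1)
  fin_cases i <;> fin_cases j
  exacts [h11, h12, h13, h12, comp hG22, comp hG23, h13, comp hG23, comp hG33]

lemma lieDerivBilin_ghatPend_succ_succ (hσ : σ₀ ≠ 0) (i j : Fin 2) :
    lieDerivBilin (lamPend σ₀ μ₀) (ghatPend a σ₀ μ₀ G22 G23 G33) x i.succ j.succ =
      pdGPend a x i.succ j.succ := by
  have transport : ∑ l, lamPend σ₀ μ₀ x l *
      pd l (fun y ↦ ghatPend a σ₀ μ₀ G22 G23 G33 y i.succ j.succ) x = 0 := by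
    fin_cases i <;> fin_cases j
    · exact sum_lamPend_mul_pd_comp_firstIntegralsPend μ₀ x hσ (hG22 _)
    · exact sum_lamPend_mul_pd_comp_firstIntegralsPend μ₀ x hσ (hG23 _)
    · exact sum_lamPend_mul_pd_comp_firstIntegralsPend μ₀ x hσ (hG23 _)
    · exact sum_lamPend_mul_pd_comp_firstIntegralsPend μ₀ x hσ (hG33 _)
  have pd_lam (k : Fin 2) (l : Fin 3) : pd k.succ (fun y ↦ lamPend σ₀ μ₀ y l) x = 0 := by
    simp [pd_lamPend]
  have pd_g : pdGPend a x i.succ j.succ = 0 := by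
    rw [pdGPend, of_apply, pd_gPend]
    fin_cases i <;> fin_cases j <;> simp
  simp [lieDerivBilin, transport, pd_lam, pd_g]

end Pendulum

theorem pendulum_ghat_solution_general (a μ₀ : ℝ) {σ₀ : ℝ} (hσ : σ₀ ≠ 0)
    {G22 G23 G33 : (Fin 2 → ℝ) → ℝ} (hG22 : Differentiable ℝ G22) (hG23 : Differentiable ℝ G23)
    (hG33 : Differentiable ℝ G33) :
    (∀ x, lieDerivBilin (lamPend σ₀ μ₀) (ghatPend a σ₀ μ₀ G22 G23 G33) x = pdGPend a x) ∧
      ∀ x, gPend a x 0 = lamPend σ₀ μ₀ x ᵥ* ghatPend a σ₀ μ₀ G22 G23 G33 x := by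
  refine ⟨fun x ↦ ?_, fun x ↦ (lamPend_vecMul_ghatPend a μ₀ x hσ).symm⟩
  refine isSymm_eq_of_vecMul_eq (isSymm_lieDerivBilin fun y ↦ isSymm_ghatPend ..)
    (isSymm_pdGPend a x) (v := lamPend σ₀ μ₀ x) hσ ?_
    (lieDerivBilin_ghatPend_succ_succ a μ₀ x hG22 hG23 hG33 hσ)
  calc lamPend σ₀ μ₀ x ᵥ* lieDerivBilin (lamPend σ₀ μ₀) (ghatPend a σ₀ μ₀ G22 G23 G33) x
      = lieDerivCovector (lamPend σ₀ μ₀)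
          (fun y ↦ lamPend σ₀ μ₀ y ᵥ* ghatPend a σ₀ μ₀ G22 G23 G33 y) x :=
        vecMul_lieDerivBilin (fun i ↦ differentiable_lamPend μ₀ i x)
          fun i j ↦ differentiable_ghatPend a μ₀ hG22 hG23 hG33 i j x
    _ = lieDerivCovector (lamPend σ₀ μ₀) (fun y ↦ gPend a y 0) x := by
        simp only [lamPend_vecMul_ghatPend a μ₀ _ hσ]
    _ = lamPend σ₀ μ₀ x ᵥ* pdGPend a x := lieDerivCovector_gPend a σ₀ μ₀ x

/-- The explicitly constructed `ĝ` satisfies the ĝ-equations for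
`λ = (σ₀, μ₀ cos x¹, 0)` and the compatibility relation `g_{1i} = λ^j ĝ_{ji}`. -/
theorem pendulum_ghat_solution (a σ₀ μ₀ : ℝ) (ha : 0 < a) (ha1 : a < 1) (hσ : σ₀ ≠ 0)
    (G22 G23 G33 : (Fin 2 → ℝ) → ℝ)
    (hG22 : ContDiff ℝ (⊤ : ℕ∞) G22) (hG23 : ContDiff ℝ (⊤ : ℕ∞) G23) (hG33 : ContDiff ℝ (⊤ : ℕ∞) G33) :
    -- the ĝ-equations
    (∀ (x : Fin 3 → ℝ) (i j : Fin 3),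
      ∑ l, ![σ₀, μ₀ * Real.cos (x 0), 0] l *
          pd l (fun y => ghatPend a σ₀ μ₀ G22 G23 G33 y i j) x
        + ∑ l, pd i (fun y => ![σ₀, μ₀ * Real.cos (y 0), 0] l) x *
            ghatPend a σ₀ μ₀ G22 G23 G33 x l j
        + ∑ l, pd j (fun y => ![σ₀, μ₀ * Real.cos (y 0), 0] l) x *
            ghatPend a σ₀ μ₀ G22 G23 G33 x l i
        = pd 0 (fun y => gPend a y i j) x) ∧
    -- the compatibility relation g_{1i} = λ^j ĝ_{ji}
    (∀ (x : Fin 3 → ℝ) (i : Fin 3),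
      gPend a x 0 i =
        ∑ j, ![σ₀, μ₀ * Real.cos (x 0), 0] j * ghatPend a σ₀ μ₀ G22 G23 G33 x j i) := by
  obtain ⟨hode, hcompat⟩ := pendulum_ghat_solution_general a μ₀ hσ (hG22.differentiable (by simp))
    (hG23.differentiable (by simp)) (hG33.differentiable (by simp))
  exact ⟨fun x i j ↦ (lieDerivBilin_apply_of_isSymm (isSymm_ghatPend ..) i j).symm.trans
    (congrFun₂ (hode x) i j), fun x ↦ congrFun (hcompat x)⟩
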